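/- arXiv:2005.06384 — 4 statements merged into one kernel-verified Lean document; each statement's English description precedes it below -/
import Mathlib

section
/- For every real x > 0, Γ(0,x) > e^(−x) · [ (1 + x/b_1) · ln(1 + b_1/x) − 1 ], where b_1 := e^(1−γ) and γ is the Euler–Mascheroni constant. -/
/-!
Write `b = e^(1-γ)` and let `F` be the difference of the two sides. Differentiation gives
`F'(x) = e^(-x) (x + b - 1) / b * h(x)` with `h(x) = log (1 + b/x) - b / (x + b - 1)`.
The sign of `h'(x)` is that of `(2 - b) x - (b - 1)^2`, and `1 < b < 2`, so `h` first decreases and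
then increases to its limit `0` at infinity. Hence `h` changes sign at most once, from positive to
negative (`slopeSign_pos_left`, `slopeSign_neg_right`), so `F` increases and then decreases. As `F`
vanishes at both ends of `(0, ∞)`, it is positive.

The vanishing at `0` is where the value of `b` enters: by parts,
`Γ(0,x) = ∫_x^∞ log t e^(-t) dt - e^(-x) log x`, and `∫_0^∞ log t e^(-t) dt = Γ'(1) = -γ`. Through
this formula `F` extends continuously to `0` with value `-γ - (log b - 1) = 0`
(`gap_eq`, `gap_zero`).
-/

open Real Filter Set

/-- Upper incomplete gamma function `Γ(a,x) = ∫_x^∞ t^(a-1) e^(-t) dt`. -/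
noncomputable def incGamma (a x : ℝ) : ℝ := ∫ t in Set.Ioi x, t ^ (a - 1) * Real.exp (-t)

/-- `b_a = Γ(a+1)^(1/(a-1))` for `a ≠ 1`, and `b_1 = e^(1-γ)`. -/
noncomputable def bCoef (a : ℝ) : ℝ :=
  if a = 1 then Real.exp (1 - Real.eulerMascheroniConstant)
  else Real.Gamma (a + 1) ^ (1 / (a - 1))

/-- `G_a(x) = ((x+b_a)^a - x^a) e^(-x) / (a b_a)`. -/
noncomputable def Gbound (a x : ℝ) : ℝ :=
  ((x + bCoef a) ^ a - x ^ a) * Real.exp (-x) / (a * bCoef a)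

/-- `g_a(x) = (((x+2)^a - x^a - 2^a)/(2a) + Γ(a)) e^(-x)`. -/
noncomputable def gbound (a x : ℝ) : ℝ :=
  (((x + 2) ^ a - x ^ a - (2 : ℝ) ^ a) / (2 * a) + Real.Gamma a) * Real.exp (-x)

/-- `g_a^lo(x) = x^a e^(-x) (x-a-1) / ((x-a)^2 + a)`. -/
noncomputable def gLo (a x : ℝ) : ℝ :=
  x ^ a * Real.exp (-x) * (x - a - 1) / ((x - a) ^ 2 + a)

/-- `g_a^hi(x) = x^a e^(-x) / (x-a)`. -/
noncomputable def gHi (a x : ℝ) : ℝ := x ^ a * Real.exp (-x) / (x - a)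

open MeasureTheory Topology

/-! ### The incomplete gamma function `Γ(0, x)` near `0` -/

theorem integral_log_mul_exp_neg :
    ∫ t in Ioi (0 : ℝ), Real.log t * Real.exp (-t) = -Real.eulerMascheroniConstant := by
  have h1 := Complex.hasDerivAt_GammaIntegral (s := 1) (by simp)
  have h2 : HasDerivAt Complex.GammaIntegral (-(Real.eulerMascheroniConstant : ℂ)) 1 := by
    refine Complex.hasDerivAt_Gamma_one.congr_of_eventuallyEq ?_
    have : ∀ᶠ s : ℂ in 𝓝 1, 0 < s.re :=
      (isOpen_lt continuous_const Complex.continuous_re).mem_nhds (by simp)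
    filter_upwards [this] with s hs using (Complex.Gamma_eq_integral hs).symm
  have h3 := h1.unique h2
  simp only [sub_self, Complex.cpow_zero, one_mul] at h3
  have h4 : ((∫ t in Ioi (0 : ℝ), Real.log t * Real.exp (-t) : ℝ) : ℂ)
      = ((-Real.eulerMascheroniConstant : ℝ) : ℂ) := by
    rw [← integral_complex_ofReal]
    push_cast
    push_cast at h3
    exact h3
  exact_mod_cast h4

theorem integrableOn_log_mul_exp_neg :
    IntegrableOn (fun t : ℝ => Real.log t * Real.exp (-t)) (Ioi 0) := by
  -- A Bochner integral with a nonzero value is the integral of an integrable function.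
  by_contra h
  have h1 := integral_log_mul_exp_neg
  rw [integral_undef h] at h1
  linarith [Real.one_half_lt_eulerMascheroniConstant]

theorem integrableOn_exp_neg_div {x : ℝ} (hx : 0 < x) :
    IntegrableOn (fun t : ℝ => Real.exp (-t) / t) (Ioi x) := by
  refine Integrable.mono' ((integrableOn_exp_neg_Ioi x).div_const x) ?_ ?_
  · exact (by fun_prop : Measurable fun t : ℝ => Real.exp (-t) / t).aestronglyMeasurable
  · filter_upwards [ae_restrict_mem measurableSet_Ioi] with t ht
    have ht' : x < t := ht
    rw [Real.norm_of_nonneg (div_nonneg (Real.exp_pos _).le (by linarith))]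
    gcongr

theorem tendsto_log_mul_exp_neg :
    Tendsto (fun t : ℝ => Real.log t * Real.exp (-t)) atTop (𝓝 0) := by
  have h := tendsto_pow_mul_exp_neg_atTop_nhds_zero 1
  refine tendsto_of_tendsto_of_tendsto_of_le_of_le' tendsto_const_nhds h ?_ ?_
  · filter_upwards [eventually_ge_atTop 1] with t ht
    exact mul_nonneg (Real.log_nonneg ht) (Real.exp_pos _).le
  · filter_upwards [eventually_ge_atTop 1] with t ht
    rw [pow_one]
    gcongr
    linarith [Real.log_le_sub_one_of_pos (show 0 < t by linarith)]

theorem incGamma_zero_eq (x : ℝ) (hx : 0 < x) :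
    incGamma 0 x = ∫ t in Ioi x, Real.exp (-t) / t := by
  refine setIntegral_congr_fun measurableSet_Ioi fun t ht => ?_
  have : 0 < t := hx.trans ht
  simp only [zero_sub, Real.rpow_neg_one]
  field_simp

theorem incGamma_zero_nonneg {x : ℝ} (hx : 0 < x) : 0 ≤ incGamma 0 x := by
  rw [incGamma_zero_eq x hx]
  refine setIntegral_nonneg measurableSet_Ioi fun t ht => ?_
  have : 0 < t := hx.trans ht
  positivity

/-- Integration by parts, with the integral over `(x, ∞)` rewritten through the one over
`(0, x)`. -/
theorem incGamma_zero_parts {x : ℝ} (hx : 0 < x) :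
    incGamma 0 x = -Real.eulerMascheroniConstant - (∫ t in 0..x, Real.log t * Real.exp (-t))
      - Real.log x * Real.exp (-x) := by
  have hI := integrableOn_log_mul_exp_neg
  have hIx := hI.mono_set (Ioi_subset_Ioi hx.le)
  have h1 := intervalIntegral.integral_Ioi_sub_Ioi hI hx.le
  rw [integral_log_mul_exp_neg] at h1
  have h2 := integral_Ioi_of_hasDerivAt_of_tendsto' (a := x)
    (f := fun t => Real.log t * Real.exp (-t))
    (f' := fun t => Real.exp (-t) / t - Real.log t * Real.exp (-t)) (m := 0)
    (fun t ht => by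
      have ht0 : 0 < t := lt_of_lt_of_le hx ht
      have := (Real.hasDerivAt_log ht0.ne').mul ((hasDerivAt_id t).neg.exp)
      refine this.congr_deriv ?_
      simp only [id, Pi.neg_apply]
      field_simp
      ring)
    ((integrableOn_exp_neg_div hx).sub hIx) tendsto_log_mul_exp_neg
  rw [integral_sub (integrableOn_exp_neg_div hx) hIx, ← incGamma_zero_eq x hx] at h2
  linarith

/-! ### The difference of the two sides -/

/-- The difference between `Γ(0,x)` and the bound with parameter `b`, in the form that is
continuous at `x = 0` (the singular terms `log x` are cancelled or multiplied by `x`). -/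
noncomputable def gap (b x : ℝ) : ℝ :=
  -Real.eulerMascheroniConstant - (∫ t in 0..x, Real.log t * Real.exp (-t))
    - Real.exp (-x) * ((1 + x / b) * Real.log (x + b) - x * Real.log x / b - 1)

/-- The factor of the derivative of `gap` that determines its sign. -/
noncomputable def slopeSign (b x : ℝ) : ℝ := Real.log (1 + b / x) - b / (x + b - 1)

theorem log_one_add_div {b x : ℝ} (hb : 0 < b) (hx : 0 < x) :
    Real.log (1 + b / x) = Real.log (x + b) - Real.log x := by
  rw [← Real.log_div (by positivity) hx.ne']
  congr 1
  field_simp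

theorem gap_eq {b x : ℝ} (hb : 0 < b) (hx : 0 < x) :
    gap b x = incGamma 0 x - Real.exp (-x) * ((1 + x / b) * Real.log (1 + b / x) - 1) := by
  rw [incGamma_zero_parts hx, log_one_add_div hb hx, gap]
  ring

theorem gap_zero :
    gap (Real.exp (1 - Real.eulerMascheroniConstant)) 0 = 0 := by
  simp [gap]

theorem intervalIntegrable_log_mul_exp_neg (u v : ℝ) :
    IntervalIntegrable (fun t : ℝ => Real.log t * Real.exp (-t)) volume u v :=
  intervalIntegral.intervalIntegrable_log'.mul_continuousOn (by fun_prop)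

theorem continuousOn_gap {b : ℝ} (hb : 0 < b) : ContinuousOn (gap b) (Ici 0) := by
  have h1 := intervalIntegral.continuous_primitive intervalIntegrable_log_mul_exp_neg 0
  have h2 : ContinuousOn (fun x => Real.log (x + b)) (Ici 0) := by
    refine ContinuousOn.log (by fun_prop) fun x hx => ?_
    have : 0 ≤ x := hx
    positivity
  have h3 := Real.continuous_mul_log
  have h4 : ContinuousOn (fun x : ℝ => 1 + x / b) (Ici 0) := by fun_prop (disch := positivity)
  have h5 : ContinuousOn (fun x : ℝ => Real.exp (-x)) (Ici 0) := by fun_prop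
  exact (continuousOn_const.sub h1.continuousOn).sub
    (h5.mul (((h4.mul h2).sub (h3.continuousOn.div_const b)).sub continuousOn_const))

theorem hasDerivAt_gap {b x : ℝ} (hb : 1 < b) (hx : 0 < x) :
    HasDerivAt (gap b) (Real.exp (-x) * ((x + b - 1) / b) * slopeSign b x) x := by
  have hb0 : 0 < b := by linarith
  have hc : x + b - 1 ≠ 0 := by linarith
  have h1 : HasDerivAt (fun u => ∫ t in 0..u, Real.log t * Real.exp (-t))
      (Real.log x * Real.exp (-x)) x := by
    refine intervalIntegral.integral_hasDerivAt_right (intervalIntegrable_log_mul_exp_neg 0 x)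
      ?_ ?_
    · exact (by fun_prop : Measurable fun t : ℝ =>
        Real.log t * Real.exp (-t)).stronglyMeasurable.stronglyMeasurableAtFilter
    · exact (Real.continuousAt_log hx.ne').mul (by fun_prop)
  have h2 : HasDerivAt (fun u => Real.exp (-u)) (-Real.exp (-x)) x := by
    simpa using (hasDerivAt_neg x).exp
  have h3 : HasDerivAt (fun u => Real.log (u + b)) (1 / (x + b)) x :=
    ((hasDerivAt_id x).add_const b).log (by simp only [id]; positivity)
  have h4 : HasDerivAt (fun u => 1 + u / b) (1 / b) x :=
    ((hasDerivAt_id x).div_const b).const_add 1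
  have h5 := ((h4.mul h3).sub ((Real.hasDerivAt_mul_log hx.ne').div_const b)).sub_const 1
  have h6 := (h1.const_sub (-Real.eulerMascheroniConstant)).sub (h2.mul h5)
  refine h6.congr_deriv ?_
  rw [slopeSign, log_one_add_div hb0 hx]
  have : x + b ≠ 0 := by positivity
  simp only [Pi.mul_apply, Pi.sub_apply]
  field_simp
  ring

/-! ### The sign of the derivative -/

theorem hasDerivAt_slopeSign {b x : ℝ} (hb : 1 < b) (hx : 0 < x) :
    HasDerivAt (slopeSign b)
      (b * ((2 - b) * x - (b - 1) ^ 2) / (x * (x + b) * (x + b - 1) ^ 2)) x := by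
  have hb0 : 0 < b := by linarith
  have hc : x + b - 1 ≠ 0 := by linarith
  have hd : x + b ≠ 0 := by positivity
  have h1 : HasDerivAt (fun u => Real.log (u + b) - Real.log u) (1 / (x + b) - x⁻¹) x :=
    (((hasDerivAt_id x).add_const b).log hd).sub (Real.hasDerivAt_log hx.ne')
  have h2 : HasDerivAt (fun u => b / (u + b - 1)) ((0 * (x + b - 1) - b * 1) / (x + b - 1) ^ 2) x :=
    (hasDerivAt_const x b).div (((hasDerivAt_id x).add_const b).sub_const 1) hc
  refine ((h1.sub h2).congr_of_eventuallyEq ?_).congr_deriv ?_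
  · filter_upwards [Ioi_mem_nhds hx] with u hu
    simp only [slopeSign, Pi.sub_apply, log_one_add_div hb0 hu]
  · field_simp
    ring

/-- Left of the critical point `(b - 1)^2 / (2 - b)`, `slopeSign` decreases. -/
theorem slopeSign_strictAntiOn {b : ℝ} (hb : 1 < b) (hb2 : b < 2) :
    StrictAntiOn (slopeSign b) (Ioc 0 ((b - 1) ^ 2 / (2 - b))) := by
  refine strictAntiOn_of_deriv_neg (convex_Ioc _ _)
    (fun x hx => (hasDerivAt_slopeSign hb hx.1).continuousAt.continuousWithinAt) fun x hx => ?_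
  rw [interior_Ioc] at hx
  have hx0 := hx.1
  rw [(hasDerivAt_slopeSign hb hx0).deriv]
  have h := (lt_div_iff₀ (by linarith)).1 hx.2
  have hc : 0 < x + b - 1 := by linarith
  exact div_neg_of_neg_of_pos (mul_neg_of_pos_of_neg (by linarith) (by linarith)) (by positivity)

theorem slopeSign_neg_of_ge {b x : ℝ} (hb : 1 < b) (hb2 : b < 2)
    (hx : (b - 1) ^ 2 / (2 - b) ≤ x) : slopeSign b x < 0 := by
  have hc0 : 0 < (b - 1) ^ 2 / (2 - b) :=
    div_pos (pow_pos (by linarith) 2) (by linarith)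
  have hmono : StrictMonoOn (slopeSign b) (Ici ((b - 1) ^ 2 / (2 - b))) := by
    refine strictMonoOn_of_deriv_pos (convex_Ici _)
      (fun y hy => (hasDerivAt_slopeSign hb (hc0.trans_le hy)).continuousAt.continuousWithinAt)
      fun y hy => ?_
    rw [interior_Ici] at hy
    have hy0 : 0 < y := hc0.trans hy
    rw [(hasDerivAt_slopeSign hb hy0).deriv]
    have h := (div_lt_iff₀ (by linarith)).1 (mem_Ioi.1 hy)
    have hc : 0 < y + b - 1 := by linarith
    exact div_pos (mul_pos (by linarith) (by linarith)) (by positivity)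
  have h1 : slopeSign b x < slopeSign b (x + 1) :=
    hmono hx (mem_Ici.2 (by linarith)) (by linarith)
  have h2 : slopeSign b (x + 1) ≤ 0 := by
    -- `slopeSign b y ≤ log (1 + b / y) ≤ b / y`, which tends to `0`.
    refine ge_of_tendsto ((tendsto_const_nhds (x := b)).div_atTop tendsto_id) ?_
    filter_upwards [eventually_ge_atTop (x + 1)] with y hy
    have hy0 : 0 < y := by linarith
    refine (hmono.monotoneOn (mem_Ici.2 (by linarith)) (mem_Ici.2 (by linarith)) hy).trans ?_
    have h3 := Real.log_le_sub_one_of_pos (show 0 < 1 + b / y by positivity)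
    have h4 : 0 < b / (y + b - 1) := div_pos (by linarith) (by linarith)
    simp only [slopeSign, id]
    linarith
  linarith

theorem slopeSign_pos_left {b x y : ℝ} (hb : 1 < b) (hb2 : b < 2) (h : 0 ≤ slopeSign b x)
    (hy : 0 < y) (hyx : y < x) : 0 < slopeSign b y := by
  have hx : x < (b - 1) ^ 2 / (2 - b) := by
    by_contra! hx
    linarith [slopeSign_neg_of_ge hb hb2 hx]
  linarith [slopeSign_strictAntiOn hb hb2 ⟨hy, by linarith⟩ ⟨hy.trans hyx, hx.le⟩ hyx]

theorem slopeSign_neg_right {b x y : ℝ} (hb : 1 < b) (hb2 : b < 2) (h : slopeSign b x < 0)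
    (hx : 0 < x) (hxy : x < y) : slopeSign b y < 0 := by
  by_contra! hy
  linarith [slopeSign_pos_left hb hb2 hy hx hxy]

/-! ### Positivity of the difference -/

/-- On a half-line where `gap` decreases it is positive, since it is bounded below by a function
tending to `0`. -/
theorem gap_pos_of_slopeSign_neg {b x : ℝ} (hb : 1 < b) (hx : 0 < x)
    (h : ∀ y, x < y → slopeSign b y < 0) : 0 < gap b x := by
  have hb0 : 0 < b := by linarith
  have hanti : StrictAntiOn (gap b) (Ici x) := by
    refine strictAntiOn_of_deriv_neg (convex_Ici _)
      ((continuousOn_gap hb0).mono (Ici_subset_Ici.2 hx.le)) fun y hy => ?_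
    rw [interior_Ici] at hy
    have hy0 : 0 < y := hx.trans hy
    rw [(hasDerivAt_gap hb hy0).deriv]
    have hc : 0 < y + b - 1 := by linarith
    exact mul_neg_of_pos_of_neg (by positivity) (h y hy)
  have h1 : gap b (x + 1) < gap b x := hanti self_mem_Ici (mem_Ici.2 (by linarith)) (by linarith)
  have h2 : 0 ≤ gap b (x + 1) := by
    have hlim : Tendsto (fun y : ℝ => -(Real.exp (-y) * b)) atTop (𝓝 0) := by
      simpa using (Real.tendsto_exp_neg_atTop_nhds_zero.mul_const b).neg
    refine le_of_tendsto hlim ?_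
    filter_upwards [eventually_ge_atTop (x + 1)] with y hy
    have hy0 : 0 < y := by linarith
    refine le_trans ?_ (hanti.antitoneOn (mem_Ici.2 (by linarith)) (mem_Ici.2 (by linarith)) hy)
    rw [gap_eq hb0 hy0]
    -- `log (1 + b / y) ≤ b / y` bounds the bracket by `b / y`.
    have h3 : (1 + y / b) * Real.log (1 + b / y) - 1 ≤ b := by
      have h4 := Real.log_le_sub_one_of_pos (show 0 < 1 + b / y by positivity)
      calc (1 + y / b) * Real.log (1 + b / y) - 1 ≤ (1 + y / b) * (b / y) - 1 := by
            gcongr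
            linarith
        _ = b / y := by
            field_simp
            ring
        _ ≤ b := div_le_self hb0.le (by linarith)
    have h5 := mul_le_mul_of_nonneg_left h3 (Real.exp_pos (-y)).le
    linarith [incGamma_zero_nonneg hy0]
  linarith

theorem gap_pos {x : ℝ} (hx : 0 < x) :
    0 < gap (Real.exp (1 - Real.eulerMascheroniConstant)) x := by
  have hz := gap_zero
  have hb : 1 < Real.exp (1 - Real.eulerMascheroniConstant) :=
    Real.one_lt_exp_iff.2 (by linarith [Real.eulerMascheroniConstant_lt_two_thirds])
  have hb2 : Real.exp (1 - Real.eulerMascheroniConstant) < 2 := by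
    rw [← Real.lt_log_iff_exp_lt (by norm_num)]
    linarith [Real.one_half_lt_eulerMascheroniConstant, Real.log_two_gt_d9]
  generalize Real.exp (1 - Real.eulerMascheroniConstant) = b at *
  rcases lt_or_ge (slopeSign b x) 0 with h | h
  · exact gap_pos_of_slopeSign_neg hb hx fun y hy => slopeSign_neg_right hb hb2 h hx hy
  · have hmono : StrictMonoOn (gap b) (Icc 0 x) := by
      refine strictMonoOn_of_deriv_pos (convex_Icc _ _)
        ((continuousOn_gap (by linarith)).mono Icc_subset_Ici_self) fun y hy => ?_
      rw [interior_Icc] at hy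
      have hy0 := hy.1
      rw [(hasDerivAt_gap hb hy0).deriv]
      have hc : 0 < y + b - 1 := by linarith
      have hs := slopeSign_pos_left hb hb2 h hy0 hy.2
      positivity
    have := hmono (left_mem_Icc.2 hx.le) (right_mem_Icc.2 hx.le) hx
    linarith

theorem stmt15 : ∀ x : ℝ, 0 < x →
    Real.exp (-x) *
        ((1 + x / Real.exp (1 - Real.eulerMascheroniConstant)) *
            Real.log (1 + Real.exp (1 - Real.eulerMascheroniConstant) / x) - 1)
      < incGamma 0 x := by
  intro x hx
  have h := gap_pos hx
  rw [gap_eq (Real.exp_pos _) hx] at h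
  linarith
end

section
/- Let a be a real number with 1 < a < 3, and define G_{a;1}(x) := x^(a−1) e^(−x) + (a−1) · G_{a−1}(x) for real x > 0, where G_{a−1}(x) = ((x+b_{a−1})^{a−1} − x^{a−1}) e^(−x)/((a−1) b_{a−1}). Then for every real x > 0: Γ(a,x) < G_{a;1}(x) if 1 < a < 2; Γ(a,x) = G_{a;1}(x) if a = 2; and Γ(a,x) > G_{a;1}(x) if 2 < a < 3. Moreover, G_{a;1}(x)/Γ(a,x) → 1 both as x → 0+ and as x → ∞. -/
/-!
Put `c = a - 1`, `b = b_c`, so that `b ^ (c - 1) = Γ(a)`, and let `f = G_{a;1} - Γ(a, ·)`. Then `f`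
vanishes at `0` (by the choice of `b`) and at infinity, so the sign of `f` follows as soon as `f'`
changes sign at most once, in the right direction (`neg_of_single_crossing`).

Up to a positive factor, `f'(x)` is
`derivNum c b x = x^(c-1) (x + (b-1) c) - (x+b)^(c-1) (x + b - c)`.
If `x + b ≤ c` this is positive. Otherwise its sign is that of the logarithm of the ratio of its two
terms, and that logarithm divided by `c - 1` (`logRatio`) tends to `0` at infinity and has a
derivative with the sign of `(b - 1) (b - c) - x (2 - b)`, which is linear in `x`. Log-convexity of
the gamma function gives `1 ≤ b ≤ 2` (`bCoef_bounds`), so `logRatio` increases and then decreases to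
`0`, and `derivNum / (c - 1)` changes sign at most once, from negative to positive
(`derivNum_single_crossing`). Dividing by `c - 1 = a - 2` treats `a < 2` and `a > 2` together
(`diff_div_neg`). For `a = 2` the derivative vanishes identically (`diff_two`).

The limit of the ratio at `0` follows from continuity, and at infinity both functions are asymptotic
to `x^(a-1) e^(-x)` (`approx_div_tendsto`, `gammaPrim_div_tendsto`).
-/

open Real Filter Set

/-! ### Sign of the derivative -/

/-- A function on `[0, ∞)` vanishing at `0` and at `∞` whose derivative changes sign at most once,
from negative to positive, is negative on `(0, ∞)`. -/
lemma neg_of_single_crossing {f g : ℝ → ℝ} (hc : ContinuousOn f (Ici 0)) (h0 : f 0 = 0)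
    (hlim : Tendsto f atTop (nhds 0)) (hd : ∀ x, 0 < x → HasDerivAt f (g x) x)
    (hP : ∀ x y, 0 < x → x < y → g y ≤ 0 → g x < 0) (x : ℝ) (hx : 0 < x) : f x < 0 := by
  by_contra! hfx
  obtain ⟨y, ⟨hy0, hyx⟩, hy⟩ := exists_hasDerivAt_eq_slope f g hx
    (hc.mono Icc_subset_Ici_self) (fun z hz => hd z hz.1)
  have hgy : 0 ≤ g y := by
    rw [hy, h0]
    apply div_nonneg <;> linarith
  have hpos : ∀ z, y < z → 0 < g z := fun z hz => by
    by_contra! hn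
    linarith [hP y z hy0 hz hn]
  have hmono : StrictMonoOn f (Ici x) := by
    apply strictMonoOn_of_deriv_pos (convex_Ici x)
    · exact hc.mono (Ici_subset_Ici.2 hx.le)
    · intro z hz
      rw [interior_Ici] at hz
      rw [(hd z (hx.trans hz)).deriv]
      exact hpos z (hyx.trans hz)
  have h1 : f x < f (x + 1) := hmono (by simp) (by simp) (by linarith)
  have h2 : f (x + 1) ≤ 0 := by
    apply ge_of_tendsto hlim
    filter_upwards [eventually_ge_atTop (x + 1)] with z hz
    exact hmono.monotoneOn (by simp) (by simp; linarith) hz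
  linarith

/-- The numerator of the derivative of `G_{a;1} - Γ(a, ·)`, with `c = a - 1`: that derivative is
`derivNum c b x * exp (-x) / b`. -/
noncomputable def derivNum (c b x : ℝ) : ℝ :=
  x ^ (c - 1) * (x + (b - 1) * c) - (x + b) ^ (c - 1) * (x + b - c)

/-- The logarithm of the ratio of the two terms of `derivNum`, divided by `c - 1`. -/
noncomputable def logRatio (c b x : ℝ) : ℝ :=
  log x - log (x + b) + (log (x + (b - 1) * c) - log (x + (b - c))) / (c - 1)

lemma logRatio_tendsto (c b : ℝ) : Tendsto (logRatio c b) atTop (nhds 0) := by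
  have h := fun y : ℝ => tendsto_log_comp_add_sub_log y
  have := (h b).neg.add (((h ((b - 1) * c)).sub (h (b - c))).div_const (c - 1))
  simp only [neg_zero, sub_zero, zero_div, add_zero] at this
  refine this.congr fun x => ?_
  simp only [logRatio]
  ring

lemma logRatio_hasDerivAt {c b x : ℝ} (hc0 : 0 < c) (hc1 : c ≠ 1) (hb1 : 1 ≤ b)
    (hx : 0 < x) (hxb : 0 < x + (b - c)) :
    HasDerivAt (logRatio c b)
      (-(b * c * (x * (2 - b) - (b - 1) * (b - c))) /
        (x * (x + b) * (x + (b - 1) * c) * (x + (b - c)))) x := by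
  have hp : 0 < x + (b - 1) * c := by nlinarith
  have hb : 0 < x + b := by linarith
  have hc1' : c - 1 ≠ 0 := sub_ne_zero.2 hc1
  have e : ∀ d : ℝ, 0 < x + d → HasDerivAt (fun x => log (x + d)) (1 / (x + d)) x := fun d hd =>
    ((hasDerivAt_id x).add_const d).log hd.ne'
  have := ((hasDerivAt_log hx.ne').sub (e b hb)).add
    (((e _ hp).sub (e _ hxb)).div_const (c - 1))
  refine this.congr_deriv ?_
  field_simp
  ring

lemma derivNum_eq {c b x : ℝ} (hc0 : 0 < c) (hb1 : 1 ≤ b) (hx : 0 < x)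
    (hxb : 0 < x + (b - c)) :
    derivNum c b x = exp ((c - 1) * log x + log (x + (b - 1) * c)) -
      exp ((c - 1) * log (x + b) + log (x + (b - c))) := by
  have hp : 0 < x + (b - 1) * c := by nlinarith
  have hb : 0 < x + b := by linarith
  rw [exp_add, exp_add, exp_log hp, exp_log hxb, derivNum, rpow_def_of_pos hx, rpow_def_of_pos hb,
    mul_comm (log x), mul_comm (log (x + b)), add_sub_assoc]

lemma exponent_sub {c b x : ℝ} (hc1 : c ≠ 1) :
    ((c - 1) * log x + log (x + (b - 1) * c)) - ((c - 1) * log (x + b) + log (x + (b - c))) =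
      (c - 1) * logRatio c b x := by
  have hc1' : c - 1 ≠ 0 := sub_ne_zero.2 hc1
  rw [logRatio]
  generalize log x = A, log (x + b) = B, log (x + (b - 1) * c) = C, log (x + (b - c)) = D
  field_simp
  ring

lemma derivNum_div_nonpos_iff {c b x : ℝ} (hc0 : 0 < c) (hc1 : c ≠ 1) (hb1 : 1 ≤ b) (hx : 0 < x)
    (hxb : 0 < x + (b - c)) : derivNum c b x / (c - 1) ≤ 0 ↔ logRatio c b x ≤ 0 := by
  rw [derivNum_eq hc0 hb1 hx hxb]
  have hs := exponent_sub (b := b) (x := x) hc1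
  rcases lt_or_gt_of_ne hc1 with h | h
  · rw [div_le_iff_of_neg (by linarith), zero_mul, sub_nonneg, exp_le_exp, ← sub_nonneg, hs]
    constructor <;> intro h' <;> nlinarith
  · rw [div_le_iff₀ (by linarith), zero_mul, sub_nonpos, exp_le_exp, ← sub_nonpos, hs]
    constructor <;> intro h' <;> nlinarith

lemma derivNum_div_neg_iff {c b x : ℝ} (hc0 : 0 < c) (hc1 : c ≠ 1) (hb1 : 1 ≤ b) (hx : 0 < x)
    (hxb : 0 < x + (b - c)) : derivNum c b x / (c - 1) < 0 ↔ logRatio c b x < 0 := by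
  rw [derivNum_eq hc0 hb1 hx hxb]
  have hs := exponent_sub (b := b) (x := x) hc1
  rcases lt_or_gt_of_ne hc1 with h | h
  · rw [div_lt_iff_of_neg (by linarith), zero_mul, sub_pos, exp_lt_exp, ← sub_pos, hs]
    constructor <;> intro h' <;> nlinarith
  · rw [div_lt_iff₀ (by linarith), zero_mul, sub_neg, exp_lt_exp, ← sub_neg, hs]
    constructor <;> intro h' <;> nlinarith

/-- The derivative of `logRatio` has the sign of `-(x (2 - b) - (b - 1) (b - c))`, which is
linear and nonincreasing in `x`. Since `logRatio` vanishes at infinity, it is positive wherever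
it has started to decrease; where it is nonpositive it is therefore still increasing. -/
lemma derivNum_single_crossing {c b : ℝ} (hc0 : 0 < c) (hc2 : c < 2) (hc1 : c ≠ 1)
    (hb1 : 1 ≤ b) (hb2 : b ≤ 2) (x y : ℝ) (hx : 0 < x) (hxy : x < y) (hy : derivNum c b y / (c - 1) ≤ 0) :
    derivNum c b x / (c - 1) < 0 := by
  have hy0 : 0 < y := hx.trans hxy
  have hb0 : 0 < b := by linarith
  -- If `y + b ≤ c` then `c > 1` and both terms of `derivNum` contribute positively.
  have hyb : 0 < y + (b - c) := by
    by_contra! hn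
    have h1 : 0 < c - 1 := by linarith
    have h2 : 0 < derivNum c b y := by
      have e1 : 0 < y ^ (c - 1) := rpow_pos_of_pos hy0 _
      have e2 : 0 < (y + b) ^ (c - 1) := rpow_pos_of_pos (by linarith) _
      have e3 : 0 < y + (b - 1) * c := by nlinarith
      have e4 := mul_pos e1 e3
      have e5 : (y + b) ^ (c - 1) * (y + b - c) ≤ 0 :=
        mul_nonpos_of_nonneg_of_nonpos e2.le (by linarith)
      rw [derivNum]
      linarith
    linarith [div_pos h2 h1]
  have hMy := (derivNum_div_nonpos_iff hc0 hc1 hb1 hy0 hyb).1 hy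
  have hden : ∀ z, 0 < z → 0 < z + (b - c) →
      0 < z * (z + b) * (z + (b - 1) * c) * (z + (b - c)) := fun z hz hzb => by
    have e3 : 0 < z + (b - 1) * c := by nlinarith
    positivity
  have hq : y * (2 - b) - (b - 1) * (b - c) < 0 := by
    by_contra! hq
    have hb2' : b < 2 := by
      rcases hb2.lt_or_eq with h | h
      · exact h
      · subst h
        linarith
    have hanti : StrictAntiOn (logRatio c b) (Ici y) := by
      apply strictAntiOn_of_deriv_neg (convex_Ici y)
      · intro z hz
        have hz : y ≤ z := hz
        exact (logRatio_hasDerivAt hc0 hc1 hb1 (by linarith)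
          (by linarith)).continuousAt.continuousWithinAt
      · intro z hz
        rw [interior_Ici] at hz
        have hz : y < z := hz
        rw [(logRatio_hasDerivAt hc0 hc1 hb1 (by linarith) (by linarith)).deriv]
        apply div_neg_of_neg_of_pos _ (hden z (by linarith) (by linarith))
        have : y * (2 - b) < z * (2 - b) := mul_lt_mul_of_pos_right hz (by linarith)
        have : 0 < b * c := by positivity
        nlinarith
    have h1 : logRatio c b (y + 1) < logRatio c b y := hanti (by simp) (by simp) (by linarith)
    have h2 : 0 ≤ logRatio c b (y + 1) := by
      apply le_of_tendsto (logRatio_tendsto c b)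
      filter_upwards [eventually_ge_atTop (y + 1)] with z hz
      exact hanti.antitoneOn (by simp) (by simp; linarith) hz
    linarith
  have hbc : c < b := by
    by_contra! hn
    have := mul_nonneg hy0.le (sub_nonneg.2 hb2)
    have := mul_nonneg (sub_nonneg.2 hb1) (sub_nonneg.2 hn)
    nlinarith
  have hmono : StrictMonoOn (logRatio c b) (Icc x y) := by
    apply strictMonoOn_of_deriv_pos (convex_Icc x y)
    · intro z hz
      have hz0 : 0 < z := hx.trans_le hz.1
      exact (logRatio_hasDerivAt hc0 hc1 hb1 hz0 (by linarith)).continuousAt.continuousWithinAt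
    · intro z hz
      rw [interior_Icc] at hz
      have hz0 : 0 < z := hx.trans hz.1
      rw [(logRatio_hasDerivAt hc0 hc1 hb1 hz0 (by linarith)).deriv]
      apply div_pos _ (hden z hz0 (by linarith))
      have : z * (2 - b) ≤ y * (2 - b) := mul_le_mul_of_nonneg_right hz.2.le (by linarith)
      have : 0 < b * c := by positivity
      nlinarith
  have := hmono ⟨le_rfl, hxy.le⟩ ⟨hxy.le, le_rfl⟩ hxy
  exact (derivNum_div_neg_iff hc0 hc1 hb1 hx (by linarith)).2 (by linarith)

/-! ### The constant `b_c` -/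

lemma bCoef_pos {c : ℝ} (hc : 0 < c) : 0 < bCoef c := by
  unfold bCoef
  split_ifs
  · exact exp_pos _
  · exact rpow_pos_of_pos (Gamma_pos_of_pos (by linarith)) _

lemma bCoef_rpow {c : ℝ} (hc : 0 < c) : bCoef c ^ (c - 1) = Gamma (c + 1) := by
  by_cases h : c = 1
  · subst h
    norm_num
  · have h' : c - 1 ≠ 0 := sub_ne_zero.2 h
    rw [bCoef, if_neg h, ← rpow_mul (Gamma_pos_of_pos (by linarith)).le, one_div,
      inv_mul_cancel₀ h', rpow_one]

/-- `1 ≤ b_c ≤ 2`: the log-convex function `Γ(c + 1)` lies below its chord on the inside and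
above its chord on the outside of the intervals with endpoint values `Γ(1) = Γ(2) = 1` and
`Γ(2) = 1`, `Γ(3) = 2`. -/
lemma bCoef_bounds {c : ℝ} (hc0 : 0 < c) (hc2 : c < 2) (hc1 : c ≠ 1) :
    1 ≤ bCoef c ∧ bCoef c ≤ 2 := by
  have hb := bCoef_pos hc0
  have hlog : (c - 1) * log (bCoef c) = log (Gamma (c + 1)) := by
    rw [← log_rpow hb, bCoef_rpow hc0]
  have hG3 : Gamma 3 = 2 := by simp
  have hl2 : 0 < log 2 := log_pos (by norm_num)
  have conv : ∀ x y t : ℝ, 0 < x → 0 < y → 0 ≤ t → t ≤ 1 →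
      log (Gamma ((1 - t) * x + t * y)) ≤ (1 - t) * log (Gamma x) + t * log (Gamma y) :=
    fun x y t hx hy h0 h1 => by
      simpa using convexOn_log_Gamma.2 (mem_Ioi.2 hx) (mem_Ioi.2 hy)
        (sub_nonneg.2 h1) h0 (by ring)
  have key : 0 ≤ log (bCoef c) ∧ log (bCoef c) ≤ log 2 := by
    rcases lt_or_gt_of_ne hc1 with h | h
    · have h1 := conv 1 2 c one_pos two_pos hc0.le h.le
      have h2 := conv (c + 1) 3 ((1 - c) / (2 - c)) (by linarith) (by norm_num)
        (div_nonneg (by linarith) (by linarith)) ((div_le_one (by linarith)).2 (by linarith))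
      have e : (2 : ℝ) - c ≠ 0 := by linarith
      rw [show (1 - c) * 1 + c * 2 = c + 1 by ring, Gamma_one, Gamma_two, ← hlog] at h1
      rw [show (1 - (1 - c) / (2 - c)) * (c + 1) + (1 - c) / (2 - c) * 3 = 2 by field_simp; ring,
        Gamma_two, hG3, ← hlog, show 1 - (1 - c) / (2 - c) = 1 / (2 - c) by field_simp; ring] at h2
      simp only [log_one, mul_zero, add_zero] at h1 h2
      have h3 : 0 ≤ (1 - c) / (2 - c) * (log 2 - log (bCoef c)) := by
        have : 1 / (2 - c) * ((c - 1) * log (bCoef c)) + (1 - c) / (2 - c) * log 2 =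
          (1 - c) / (2 - c) * (log 2 - log (bCoef c)) := by ring
        linarith
      have h4 := nonneg_of_mul_nonneg_right h3 (div_pos (by linarith) (by linarith))
      constructor
      · nlinarith
      · linarith
    · have h1 := conv 1 (c + 1) (1 / c) one_pos (by linarith) (by positivity)
        ((div_le_one hc0).2 h.le)
      have h2 := conv 2 3 (c - 1) two_pos (by norm_num) (by linarith) (by linarith)
      rw [show (1 - 1 / c) * 1 + 1 / c * (c + 1) = 2 by field_simp; ring, Gamma_one, Gamma_two,
        ← hlog] at h1
      rw [show (1 - (c - 1)) * 2 + (c - 1) * 3 = c + 1 by ring, hG3, Gamma_two, ← hlog] at h2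
      simp only [log_one, mul_zero, zero_add] at h1 h2
      have h3 : 0 ≤ (c - 1) * log (bCoef c) := nonneg_of_mul_nonneg_right h1 (by positivity)
      constructor
      · exact nonneg_of_mul_nonneg_right h3 (by linarith)
      · exact le_of_mul_le_mul_left h2 (by linarith)
  exact ⟨(log_nonneg_iff hb).1 key.1, (log_le_log_iff hb two_pos).1 key.2⟩

/-! ### The incomplete gamma function and its approximation -/

lemma integrableOn_rpow_exp {c : ℝ} (hc : 0 < c) :
    MeasureTheory.IntegrableOn (fun t : ℝ => t ^ c * exp (-t)) (Ioi 0) := by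
  have := Real.GammaIntegral_convergent (s := c + 1) (by linarith)
  simpa [mul_comm] using this

/-- The upper incomplete gamma function written as a primitive; unlike `incGamma` it is
manifestly differentiable on the whole line. -/
noncomputable def gammaPrim (a x : ℝ) : ℝ := Gamma a - ∫ t in (0 : ℝ)..x, t ^ (a - 1) * exp (-t)

lemma incGamma_eq_gammaPrim {a x : ℝ} (ha : 1 < a) (hx : 0 ≤ x) :
    incGamma a x = gammaPrim a x := by
  have := intervalIntegral.integral_Ioi_sub_Ioi
    (integrableOn_rpow_exp (c := a - 1) (by linarith)) hx
  rw [gammaPrim, ← this, Gamma_eq_integral (by linarith), incGamma]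
  simp_rw [mul_comm (exp _)]
  ring

lemma gammaPrim_hasDerivAt {a : ℝ} (ha : 1 < a) (x : ℝ) :
    HasDerivAt (gammaPrim a) (-(x ^ (a - 1) * exp (-x))) x := by
  have hcont : Continuous fun t : ℝ => t ^ (a - 1) * exp (-t) :=
    (continuous_id.rpow_const fun _ => Or.inr (by linarith)).mul (by fun_prop)
  exact (hcont.integral_hasStrictDerivAt 0 x).hasDerivAt.const_sub _

lemma gammaPrim_tendsto {a : ℝ} (ha : 1 < a) : Tendsto (gammaPrim a) atTop (nhds 0) := by
  have h := MeasureTheory.intervalIntegral_tendsto_integral_Ioi 0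
    (integrableOn_rpow_exp (c := a - 1) (by linarith)) tendsto_id
  have h2 : Gamma a = ∫ t in Ioi (0 : ℝ), t ^ (a - 1) * exp (-t) := by
    rw [Gamma_eq_integral (by linarith)]
    simp_rw [mul_comm (exp _)]
  rw [← h2] at h
  have h3 := h.const_sub (Gamma a)
  rw [sub_self] at h3
  exact h3

/-- The approximation `G_{a;1}`, with `c = a - 1` and an arbitrary `b` in place of `b_c`. -/
noncomputable def approx (c b x : ℝ) : ℝ := (x ^ c + ((x + b) ^ c - x ^ c) / b) * exp (-x)

lemma approx_eq {c x : ℝ} (hc : 0 < c) :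
    x ^ c * exp (-x) + c * Gbound c x = approx c (bCoef c) x := by
  have := (bCoef_pos hc).ne'
  rw [Gbound, approx]
  field_simp

lemma approx_hasDerivAt {c b x : ℝ} (hb : 0 < b) (hx : 0 < x) :
    HasDerivAt (approx c b) (derivNum c b x * exp (-x) / b - x ^ c * exp (-x)) x := by
  have hxb : 0 < x + b := by linarith
  have h1 := hasDerivAt_rpow_const (x := x) (p := c) (Or.inl hx.ne')
  have h2 := ((hasDerivAt_id x).add_const b).rpow_const (p := c) (Or.inl hxb.ne')
  have h3 : HasDerivAt (fun x : ℝ => exp (-x)) (exp (-x) * -1) x := (hasDerivAt_neg x).exp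
  have := (h1.add ((h2.sub h1).div_const b)).mul h3
  refine this.congr_deriv ?_
  have e1 : x ^ c = x ^ (c - 1) * x := by rw [← rpow_add_one hx.ne']; ring_nf
  have e2 : (x + b) ^ c = (x + b) ^ (c - 1) * (x + b) := by rw [← rpow_add_one hxb.ne']; ring_nf
  simp only [derivNum, id, Pi.add_apply, Pi.sub_apply]
  rw [e1, e2]
  field_simp
  ring

lemma approx_continuous {c b : ℝ} (hc : 0 < c) : Continuous (approx c b) := by
  have h : ∀ d : ℝ, Continuous fun x : ℝ => (x + d) ^ c := fun d =>
    (continuous_id.add continuous_const).rpow_const fun _ => Or.inr hc.le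
  have h0 : Continuous fun x : ℝ => x ^ c := by simpa using h 0
  exact (h0.add (((h b).sub h0).div_const b)).mul (by fun_prop)

lemma approx_zero {c : ℝ} (hc : 0 < c) : approx c (bCoef c) 0 = Gamma (c + 1) := by
  have hb := bCoef_pos hc
  rw [← bCoef_rpow hc, rpow_sub_one hb.ne']
  simp [approx, zero_rpow hc.ne']

/-- The leading behaviour `G_{a;1}(x) ~ x^(a-1) e^(-x)` at infinity. -/
lemma approx_div_tendsto (c b : ℝ) :
    Tendsto (fun x => approx c b x / (x ^ c * exp (-x))) atTop (nhds 1) := by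
  have h1 : Tendsto (fun x : ℝ => 1 + b / x) atTop (nhds 1) := by
    simpa using (tendsto_const_nhds (x := b)).div_atTop tendsto_id |>.const_add 1
  have h2 : Tendsto (fun x : ℝ => 1 + ((1 + b / x) ^ c - 1) / b) atTop (nhds 1) := by
    have := (((h1.rpow_const (p := c) (Or.inl one_ne_zero)).sub_const 1).div_const b).const_add 1
    simpa using this
  refine h2.congr' ?_
  filter_upwards [eventually_gt_atTop 0, eventually_gt_atTop (-b)] with x hx hxb
  have hxc : 0 < x ^ c := rpow_pos_of_pos hx c
  have e : 1 + b / x = (x + b) / x := by field_simp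
  rw [e, div_rpow (by linarith) hx.le, approx]
  have := exp_pos (-x)
  field_simp

lemma rpow_mul_exp_tendsto (c : ℝ) : Tendsto (fun x : ℝ => x ^ c * exp (-x)) atTop (nhds 0) := by
  simpa using tendsto_rpow_mul_exp_neg_mul_atTop_nhds_zero c 1 one_pos

lemma approx_tendsto (c b : ℝ) : Tendsto (approx c b) atTop (nhds 0) := by
  have := (approx_div_tendsto c b).mul (rpow_mul_exp_tendsto c)
  rw [mul_zero] at this
  refine this.congr' ?_
  filter_upwards [eventually_gt_atTop 0] with x hx
  have hxc : 0 < x ^ c := rpow_pos_of_pos hx c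
  have := exp_pos (-x)
  field_simp

/-- `Γ(a, x) ~ x^(a-1) e^(-x)` at infinity, by L'Hôpital's rule. -/
lemma gammaPrim_div_tendsto {a : ℝ} (ha : 1 < a) :
    Tendsto (fun x => gammaPrim a x / (x ^ (a - 1) * exp (-x))) atTop (nhds 1) := by
  apply HasDerivAt.lhopital_zero_atTop (f' := fun x => -(x ^ (a - 1) * exp (-x)))
    (g' := fun x => x ^ (a - 1) * exp (-x) * ((a - 1) / x - 1))
  · exact Eventually.of_forall (gammaPrim_hasDerivAt ha)
  · filter_upwards [eventually_gt_atTop 0] with x hx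
    have h1 := hasDerivAt_rpow_const (x := x) (p := a - 1) (Or.inl hx.ne')
    have h3 : HasDerivAt (fun x : ℝ => exp (-x)) (exp (-x) * -1) x := (hasDerivAt_neg x).exp
    refine (h1.mul h3).congr_deriv ?_
    rw [rpow_sub_one hx.ne' (a - 1)]
    field_simp
    ring
  · filter_upwards [eventually_gt_atTop 0, eventually_gt_atTop (a - 1)] with x hx hxa
    have hxc : 0 < x ^ (a - 1) := rpow_pos_of_pos hx _
    have : (a - 1) / x < 1 := (div_lt_one hx).2 hxa
    exact mul_ne_zero (by positivity) (by linarith)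
  · exact gammaPrim_tendsto ha
  · exact rpow_mul_exp_tendsto _
  · have h1 : Tendsto (fun x : ℝ => 1 - (a - 1) / x) atTop (nhds 1) := by
      simpa using (tendsto_const_nhds (x := a - 1)).div_atTop tendsto_id |>.const_sub 1
    have h2 := h1.inv₀ one_ne_zero
    rw [inv_one] at h2
    refine h2.congr' ?_
    filter_upwards [eventually_gt_atTop 0, eventually_gt_atTop (a - 1)] with x hx hxa
    have hxc : 0 < x ^ (a - 1) := rpow_pos_of_pos hx _
    have h5 : (a - 1) / x < 1 := (div_lt_one hx).2 hxa
    have h6 := mul_pos hxc (exp_pos (-x))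
    rw [inv_eq_one_div, div_eq_div_iff (by linarith) (mul_ne_zero h6.ne' (by linarith))]
    ring

lemma diff_hasDerivAt {a b x : ℝ} (ha : 1 < a) (hb : 0 < b) (hx : 0 < x) :
    HasDerivAt (fun x => approx (a - 1) b x - gammaPrim a x)
      (derivNum (a - 1) b x * exp (-x) / b) x := by
  refine ((approx_hasDerivAt (c := a - 1) hb hx).sub (gammaPrim_hasDerivAt ha x)).congr_deriv ?_
  ring

lemma diff_tendsto {a : ℝ} (b : ℝ) (ha : 1 < a) :
    Tendsto (fun x => approx (a - 1) b x - gammaPrim a x) atTop (nhds 0) := by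
  simpa using (approx_tendsto (a - 1) b).sub (gammaPrim_tendsto ha)

lemma gammaPrim_continuous {a : ℝ} (ha : 1 < a) : Continuous (gammaPrim a) :=
  continuous_iff_continuousAt.2 fun x => (gammaPrim_hasDerivAt ha x).continuousAt

/-! ### The comparison -/

/-- The comparison for both ranges of `a` at once: the difference `G_{a;1} - Γ(a, ·)` has the sign
opposite to that of `a - 2`. -/
lemma diff_div_neg {a : ℝ} (ha1 : 1 < a) (ha3 : a < 3) (ha2 : a ≠ 2) {x : ℝ} (hx : 0 < x) :
    (approx (a - 1) (bCoef (a - 1)) x - gammaPrim a x) / (a - 2) < 0 := by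
  have hc0 : 0 < a - 1 := by linarith
  have hc1 : a - 1 ≠ 1 := fun h => ha2 (by linarith)
  have hb := bCoef_pos hc0
  obtain ⟨hb1, hb2⟩ := bCoef_bounds hc0 (by linarith) hc1
  set b := bCoef (a - 1) with hbdef
  have e : ∀ z, derivNum (a - 1) b z * exp (-z) / b / (a - 2) =
      derivNum (a - 1) b z / (a - 1 - 1) * (exp (-z) / b) := fun z => by
    rw [show a - 1 - 1 = a - 2 by ring]
    ring
  have hw : ∀ z : ℝ, 0 < exp (-z) / b := fun z => by positivity
  refine neg_of_single_crossing (f := fun x => (approx (a - 1) b x - gammaPrim a x) / (a - 2))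
    (((approx_continuous hc0).sub (gammaPrim_continuous ha1)).div_const _).continuousOn
    ?_ ?_ (fun z hz => (diff_hasDerivAt ha1 hb hz).div_const (a - 2)) ?_ x hx
  · simp [hbdef, approx_zero hc0, gammaPrim]
  · simpa using (diff_tendsto b ha1).div_const (a - 2)
  · intro u v hu huv hv
    rw [e] at hv ⊢
    have h1 := nonpos_of_mul_nonpos_left hv (hw v)
    exact mul_neg_of_neg_of_pos
      (derivNum_single_crossing hc0 (by linarith) hc1 hb1 hb2 u v hu huv h1) (hw u)

/-- For `a = 2` the derivative of the difference vanishes identically. -/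
lemma diff_two {b x : ℝ} (hb : 0 < b) (hx : 0 < x) :
    approx (2 - 1) b x = gammaPrim 2 x := by
  have hconst : ∀ y, x ≤ y → approx (2 - 1) b y - gammaPrim 2 y =
      approx (2 - 1) b x - gammaPrim 2 x := by
    intro y hy
    have hd : ∀ z, 0 < z → HasDerivAt (fun x => approx (2 - 1) b x - gammaPrim 2 x) 0 z := by
      intro z hz
      refine (diff_hasDerivAt (a := 2) one_lt_two hb hz).congr_deriv ?_
      norm_num [derivNum]
      left
      ring
    refine constant_of_derivWithin_zero (f := fun x => approx (2 - 1) b x - gammaPrim 2 x)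
      (a := x) (b := y) ?_ ?_ y ⟨hy, le_rfl⟩
    · intro z hz
      exact (hd z (hx.trans_le hz.1)).differentiableAt.differentiableWithinAt
    · intro z hz
      exact (hd z (hx.trans_le hz.1)).hasDerivWithinAt.derivWithin
        (uniqueDiffOn_Icc (hz.1.trans_lt hz.2) z ⟨hz.1, hz.2.le⟩)
  have h1 : Tendsto (fun y => approx (2 - 1) b y - gammaPrim 2 y) atTop
      (nhds (approx (2 - 1) b x - gammaPrim 2 x)) := by
    refine tendsto_const_nhds.congr' ?_
    filter_upwards [eventually_ge_atTop x] with y hy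
    exact (hconst y hy).symm
  linarith [tendsto_nhds_unique h1 (diff_tendsto b one_lt_two)]

theorem stmt16 (a : ℝ) (ha1 : 1 < a) (ha3 : a < 3) :
    (∀ x : ℝ, 0 < x →
      ((1 < a ∧ a < 2) →
        incGamma a x < x ^ (a - 1) * Real.exp (-x) + (a - 1) * Gbound (a - 1) x) ∧
      (a = 2 →
        incGamma a x = x ^ (a - 1) * Real.exp (-x) + (a - 1) * Gbound (a - 1) x) ∧
      ((2 < a ∧ a < 3) →
        x ^ (a - 1) * Real.exp (-x) + (a - 1) * Gbound (a - 1) x < incGamma a x)) ∧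
    Filter.Tendsto
      (fun x : ℝ => (x ^ (a - 1) * Real.exp (-x) + (a - 1) * Gbound (a - 1) x) / incGamma a x)
      (nhdsWithin 0 (Set.Ioi 0)) (nhds 1) ∧
    Filter.Tendsto
      (fun x : ℝ => (x ^ (a - 1) * Real.exp (-x) + (a - 1) * Gbound (a - 1) x) / incGamma a x)
      Filter.atTop (nhds 1) := by
  have hc0 : 0 < a - 1 := by linarith
  have hG : 0 < Gamma a := Gamma_pos_of_pos (by linarith)
  simp_rw [approx_eq hc0]
  refine ⟨fun x hx => ?_, ?_, ?_⟩
  · rw [incGamma_eq_gammaPrim ha1 hx.le]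
    refine ⟨fun h => ?_, fun h => ?_, fun h => ?_⟩
    · have := diff_div_neg ha1 ha3 h.2.ne hx
      rw [div_lt_iff_of_neg (by linarith)] at this
      linarith
    · subst h
      exact (diff_two (bCoef_pos hc0) hx).symm
    · have := diff_div_neg ha1 ha3 h.1.ne' hx
      rw [div_lt_iff₀ (by linarith)] at this
      linarith
  · have hA := (approx_continuous (b := bCoef (a - 1)) hc0).tendsto 0
    have hP := (gammaPrim_continuous ha1).tendsto 0
    rw [approx_zero hc0, sub_add_cancel] at hA
    have hP0 : gammaPrim a 0 = Gamma a := by simp [gammaPrim]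
    rw [hP0] at hP
    have := (hA.div hP hG.ne').mono_left (nhdsWithin_le_nhds (s := Set.Ioi 0))
    rw [div_self hG.ne'] at this
    refine this.congr' ?_
    filter_upwards [self_mem_nhdsWithin] with x hx
    simp only [Pi.div_apply, incGamma_eq_gammaPrim ha1 (le_of_lt hx)]
  · have := (approx_div_tendsto (a - 1) (bCoef (a - 1))).div (gammaPrim_div_tendsto ha1) one_ne_zero
    rw [div_one] at this
    refine this.congr' ?_
    filter_upwards [eventually_gt_atTop 0] with x hx
    rw [incGamma_eq_gammaPrim ha1 hx.le]
    exact div_div_div_cancel_right₀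
      (mul_pos (rpow_pos_of_pos hx _) (exp_pos _)).ne' _ _
end

section
/- Let a be a real number with a < 0. Then for every real x > 0, Γ(a,x) < e^(−x) x^a (1 − a + x)/((x−a)² − a + 2x) < x^a e^(−x)/(x−a). Moreover, the middle expression, as an upper bound on Γ(a,x), is exact both at 0 and at infinity: its ratio to Γ(a,x) tends to 1 as x → 0+ and as x → ∞. -/
/-!
Write `f t = t^(a-1) e^(-t)`. For a bounded differentiable `c ≥ 0`, the function
`F x = e^(-x) x^a c x` tends to `0` at infinity and satisfies `-F' = k f` with
`k x = (x - a) c x - x c' x`; hence `F x = ∫_x^∞ k f` whenever `k ≥ 0`, and comparing `F` with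
`Γ(a,x)` reduces to comparing `k` with `1` (`integral_weight`).

Put `q = x + 1 - a` and `D = (x-a)² - a + 2x`. Then `D = (x-a) q + x`, `D' = 2q`, `q² - D = 1 - a`.
* The choice `c = q / D` gives `k = 1 + 2 (1-a) x / D² > 1`, the strict upper bound.
* The choice `c = 1 / q` gives `k = 1 - (1-a) / q² ≤ 1`, the lower bound `e^(-x) x^a / q ≤ Γ(a,x)`.
  Dividing it by the upper bound leaves `D / q² → 1` as `x → ∞`.

Near `0`, the inequality `e^(-t) ≥ 1 - t^s`, valid for `0 < s ≤ 1`, is integrated against `t^(a-1)`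
with `a + s < 0`; it shows that `x^(-a) Γ(a,x)` is at least `-1/a - O(x^s)`, and `-1/a` is the value
of `q / D` at `0`.
-/

open Real Filter Set

lemma integrableOn_incGamma {a : ℝ} (ha : a < 0) {x : ℝ} (hx : 0 < x) :
    MeasureTheory.IntegrableOn (fun t : ℝ => t ^ (a - 1) * Real.exp (-t)) (Set.Ioi x) := by
  have h := integrableOn_Ioi_rpow_of_lt (a := a - 1) (by linarith) hx
  refine MeasureTheory.Integrable.mono' h ?_ ?_
  · refine ContinuousOn.aestronglyMeasurable ?_ measurableSet_Ioi
    refine ContinuousOn.mul ?_ (by fun_prop)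
    exact fun t ht => (Real.continuousAt_rpow_const t (a - 1)
      (Or.inl (hx.trans ht).ne')).continuousWithinAt
  · refine (MeasureTheory.ae_restrict_iff' measurableSet_Ioi).2 (Eventually.of_forall ?_)
    intro t ht
    have ht0 : 0 < t := hx.trans ht
    rw [Real.norm_of_nonneg (by positivity)]
    exact mul_le_of_le_one_right (by positivity) (Real.exp_le_one_iff.2 (by linarith))

/-- The function `e^(-x) x^a c x` is the tail integral of the weight `(x - a) c - x c'` against
the incomplete gamma integrand. -/
lemma integral_weight {a : ℝ} {c c' : ℝ → ℝ} {M : ℝ}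
    (hc : ∀ x, 0 < x → HasDerivAt c (c' x) x)
    (hc0 : ∀ x, 0 < x → 0 ≤ c x) (hcM : ∀ x, 0 < x → c x ≤ M)
    (hk : ∀ x, 0 < x → 0 ≤ (x - a) * c x - x * c' x) {x : ℝ} (hx : 0 < x) :
    MeasureTheory.IntegrableOn
      (fun t : ℝ => ((t - a) * c t - t * c' t) * (t ^ (a - 1) * Real.exp (-t))) (Set.Ioi x) ∧
    ∫ t in Set.Ioi x, ((t - a) * c t - t * c' t) * (t ^ (a - 1) * Real.exp (-t))
      = Real.exp (-x) * x ^ a * c x := by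
  have hd : ∀ t ∈ Set.Ici x, HasDerivAt (fun t => -(Real.exp (-t) * t ^ a * c t))
      (((t - a) * c t - t * c' t) * (t ^ (a - 1) * Real.exp (-t))) t := by
    intro t ht
    have ht0 : 0 < t := lt_of_lt_of_le hx ht
    have h1 : HasDerivAt (fun t : ℝ => Real.exp (-t)) (Real.exp (-t) * (-1)) t :=
      (hasDerivAt_neg t).exp
    have h2 := Real.hasDerivAt_rpow_const (x := t) (p := a) (Or.inl ht0.ne')
    have h3 := ((h1.mul h2).mul (hc t ht0)).neg
    refine h3.congr_deriv ?_
    have h4 : t ^ a = t ^ (a - 1) * t := by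
      rw [← Real.rpow_add_one ht0.ne']; congr 1; ring
    simp only [Pi.mul_apply, h4]
    ring
  have hpos : ∀ t ∈ Set.Ioi x,
      0 ≤ ((t - a) * c t - t * c' t) * (t ^ (a - 1) * Real.exp (-t)) := by
    intro t ht
    have ht0 : 0 < t := hx.trans ht
    have := hk t ht0
    positivity
  have hlim : Tendsto (fun t => -(Real.exp (-t) * t ^ a * c t)) atTop (nhds 0) := by
    have h0 := tendsto_rpow_mul_exp_neg_mul_atTop_nhds_zero a 1 one_pos
    have h1 := h0.mul_const M
    rw [zero_mul] at h1
    rw [← neg_zero]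
    refine Tendsto.neg (tendsto_of_tendsto_of_tendsto_of_le_of_le' tendsto_const_nhds h1 ?_ ?_)
    · filter_upwards [eventually_gt_atTop 0] with t ht
      have := hc0 t ht
      positivity
    · filter_upwards [eventually_gt_atTop 0] with t ht
      have := hcM t ht
      rw [neg_one_mul, mul_comm (Real.exp (-t))]
      gcongr
  refine ⟨MeasureTheory.integrableOn_Ioi_deriv_of_nonneg' hd hpos hlim, ?_⟩
  rw [MeasureTheory.integral_Ioi_of_hasDerivAt_of_nonneg' hd hpos hlim]
  ring

lemma denom_pos {a : ℝ} (ha : a < 0) {x : ℝ} (hx : 0 < x) : 0 < (x - a) ^ 2 - a + 2 * x := by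
  nlinarith [sq_nonneg (x - a)]

/-- The rational factor of the middle expression is below that of the weaker bound. -/
lemma middle_lt {a : ℝ} (ha : a < 0) {x : ℝ} (hx : 0 < x) :
    (1 - a + x) / ((x - a) ^ 2 - a + 2 * x) < 1 / (x - a) := by
  rw [div_lt_div_iff₀ (denom_pos ha hx) (by linarith)]
  nlinarith

lemma incGamma_lt {a : ℝ} (ha : a < 0) {x : ℝ} (hx : 0 < x) :
    incGamma a x < Real.exp (-x) * x ^ a * ((1 - a + x) / ((x - a) ^ 2 - a + 2 * x)) := by
  have hk : ∀ t : ℝ, 0 < t →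
      (t - a) * ((1 - a + t) / ((t - a) ^ 2 - a + 2 * t)) -
        t * ((1 * ((t - a) ^ 2 - a + 2 * t) - (1 - a + t) * (2 * (1 - a + t))) /
          ((t - a) ^ 2 - a + 2 * t) ^ 2)
      = 1 + 2 * (1 - a) * t / ((t - a) ^ 2 - a + 2 * t) ^ 2 := by
    intro t ht
    have := (denom_pos ha ht).ne'
    generalize hD : (t - a) ^ 2 - a + 2 * t = D at *
    field_simp
    rw [← hD]
    ring
  have hk1 : ∀ t : ℝ, 0 < t → 0 < 2 * (1 - a) * t / ((t - a) ^ 2 - a + 2 * t) ^ 2 := by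
    intro t ht
    have := denom_pos ha ht
    have : 0 < 1 - a := by linarith
    positivity
  obtain ⟨hi, he⟩ := integral_weight (a := a) (M := 1 / (-a))
    (c := fun t => (1 - a + t) / ((t - a) ^ 2 - a + 2 * t))
    (c' := fun t => (1 * ((t - a) ^ 2 - a + 2 * t) - (1 - a + t) * (2 * (1 - a + t))) /
          ((t - a) ^ 2 - a + 2 * t) ^ 2)
    (by
      intro t ht
      have h1 : HasDerivAt (fun t : ℝ => 1 - a + t) 1 t := (hasDerivAt_id t).const_add _
      have h2 : HasDerivAt (fun t : ℝ => (t - a) ^ 2 - a + 2 * t) (2 * (1 - a + t)) t := by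
        have h3 := ((((hasDerivAt_id t).sub_const a).pow 2).sub_const a).add
          ((hasDerivAt_id t).const_mul 2)
        refine h3.congr_deriv ?_
        simp
        ring
      exact h1.div h2 (denom_pos ha ht).ne')
    (fun t ht => div_nonneg (by linarith) (denom_pos ha ht).le)
    (fun t ht => (middle_lt ha ht).le.trans
      (one_div_le_one_div_of_le (by linarith) (by linarith)))
    (fun t ht => by
      rw [hk t ht]
      linarith [hk1 t ht]) hx
  rw [← he, incGamma, ← sub_pos, ← MeasureTheory.integral_sub hi (integrableOn_incGamma ha hx)]
  have hpos : ∀ t ∈ Set.Ioi x, 0 < ((t - a) * ((1 - a + t) / ((t - a) ^ 2 - a + 2 * t)) -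
        t * ((1 * ((t - a) ^ 2 - a + 2 * t) - (1 - a + t) * (2 * (1 - a + t))) /
          ((t - a) ^ 2 - a + 2 * t) ^ 2)) * (t ^ (a - 1) * Real.exp (-t))
          - t ^ (a - 1) * Real.exp (-t) := by
    intro t ht
    have ht0 : 0 < t := hx.trans ht
    rw [hk t ht0, add_mul, one_mul, add_sub_cancel_left]
    have := hk1 t ht0
    positivity
  rw [MeasureTheory.setIntegral_pos_iff_support_of_nonneg_ae
    ((MeasureTheory.ae_restrict_iff' measurableSet_Ioi).2
      (Eventually.of_forall fun t ht => (hpos t ht).le))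
    (hi.sub (integrableOn_incGamma ha hx))]
  refine lt_of_lt_of_le ?_ (MeasureTheory.measure_mono
    (s := Set.Ioi x) fun t ht => ⟨(hpos t ht).ne', ht⟩)
  simp

lemma le_incGamma {a : ℝ} (ha : a < 0) {x : ℝ} (hx : 0 < x) :
    Real.exp (-x) * x ^ a * (1 / (1 - a + x)) ≤ incGamma a x := by
  have hk : ∀ t : ℝ, 0 < t →
      (t - a) * (1 / (1 - a + t)) - t * (-1 / (1 - a + t) ^ 2)
      = 1 - (1 - a) / (1 - a + t) ^ 2 := by
    intro t ht
    have : 1 - a + t ≠ 0 := by linarith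
    field_simp
    ring
  obtain ⟨hi, he⟩ := integral_weight (a := a) (M := 1)
    (c := fun t => 1 / (1 - a + t)) (c' := fun t => -1 / (1 - a + t) ^ 2)
    (by
      intro t ht
      have h1 : HasDerivAt (fun t : ℝ => 1 - a + t) 1 t := (hasDerivAt_id t).const_add _
      have h2 : 1 - a + t ≠ 0 := by linarith
      simpa only [one_div] using h1.fun_inv h2)
    (fun t ht => div_nonneg one_pos.le (by linarith))
    (fun t ht => (div_le_one (by linarith)).2 (by linarith))
    (fun t ht => by
      rw [hk t ht, sub_nonneg, div_le_one (by nlinarith)]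
      nlinarith) hx
  rw [← he, incGamma]
  refine MeasureTheory.setIntegral_mono_on hi (integrableOn_incGamma ha hx) measurableSet_Ioi ?_
  intro t ht
  have ht0 : 0 < t := hx.trans ht
  rw [hk t ht0]
  refine mul_le_of_le_one_left (by positivity) ?_
  have : 0 ≤ (1 - a) / (1 - a + t) ^ 2 := div_nonneg (by linarith) (sq_nonneg _)
  linarith

/-- The lower bound that is sharp at `0`. -/
lemma le_incGamma_zero {a s : ℝ} (hs : 0 < s) (hs1 : s ≤ 1) (has : a + s < 0) {x : ℝ}
    (hx : 0 < x) : x ^ a * (-1 / a + x ^ s / (a + s)) ≤ incGamma a x := by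
  have ha : a < 0 := by linarith
  have i1 := integrableOn_Ioi_rpow_of_lt (a := a - 1) (by linarith) hx
  have i2 := integrableOn_Ioi_rpow_of_lt (a := a + s - 1) (by linarith) hx
  have e1 := integral_Ioi_rpow_of_lt (a := a - 1) (by linarith) hx
  have e2 := integral_Ioi_rpow_of_lt (a := a + s - 1) (by linarith) hx
  have e3 := MeasureTheory.integral_sub i1 i2
  rw [e1, e2, sub_add_cancel, sub_add_cancel, Real.rpow_add hx] at e3
  have e4 : x ^ a * (-1 / a + x ^ s / (a + s)) = -x ^ a / a - -(x ^ a * x ^ s) / (a + s) := by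
    ring
  rw [e4, ← e3, incGamma]
  refine MeasureTheory.setIntegral_mono_on (i1.sub i2) (integrableOn_incGamma ha hx)
    measurableSet_Ioi ?_
  intro t ht
  have ht0 : 0 < t := hx.trans ht
  have e5 : t ^ (a + s - 1) = t ^ (a - 1) * t ^ s := by
    rw [← Real.rpow_add ht0]; congr 1; ring
  have key : 1 - t ^ s ≤ Real.exp (-t) := by
    rcases le_total t 1 with h | h
    · have h1 : t ^ (1 : ℝ) ≤ t ^ s := Real.rpow_le_rpow_of_exponent_ge ht0 h hs1
      rw [Real.rpow_one] at h1
      linarith [Real.add_one_le_exp (-t)]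
    · linarith [Real.one_le_rpow h hs.le, Real.exp_pos (-t)]
  have h0 : 0 ≤ t ^ (a - 1) := by positivity
  calc t ^ (a - 1) - t ^ (a + s - 1) = t ^ (a - 1) * (1 - t ^ s) := by rw [e5]; ring
    _ ≤ _ := by gcongr

/-- Given the strict upper bound, a ratio of a lower bound to it tending to `1` suffices. -/
lemma tendsto_ratio {a : ℝ} (ha : a < 0) {l : Filter ℝ} (hl : ∀ᶠ x in l, (0 : ℝ) < x)
    {r : ℝ → ℝ} (hr : Tendsto r l (nhds 1))
    (h : ∀ x, 0 < x →
      r x * (Real.exp (-x) * x ^ a * ((1 - a + x) / ((x - a) ^ 2 - a + 2 * x))) ≤ incGamma a x) :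
    Tendsto (fun x : ℝ =>
      Real.exp (-x) * x ^ a * (1 - a + x) / ((x - a) ^ 2 - a + 2 * x) / incGamma a x)
      l (nhds 1) := by
  have hU : ∀ x : ℝ, 0 < x →
      0 < Real.exp (-x) * x ^ a * ((1 - a + x) / ((x - a) ^ 2 - a + 2 * x)) := by
    intro x hx
    have := denom_pos ha hx
    have : 0 < 1 - a + x := by linarith
    positivity
  have h1 : Tendsto (fun x : ℝ => incGamma a x /
      (Real.exp (-x) * x ^ a * ((1 - a + x) / ((x - a) ^ 2 - a + 2 * x)))) l (nhds 1) := by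
    refine tendsto_of_tendsto_of_tendsto_of_le_of_le' hr tendsto_const_nhds ?_ ?_
    · filter_upwards [hl] with x hx
      exact (le_div_iff₀ (hU x hx)).2 (h x hx)
    · filter_upwards [hl] with x hx
      exact (div_le_one (hU x hx)).2 (incGamma_lt ha hx).le
  have h2 := h1.inv₀ one_ne_zero
  rw [inv_one] at h2
  refine h2.congr fun x => ?_
  rw [inv_div, mul_div_assoc (Real.exp (-x) * x ^ a) (1 - a + x)]

theorem stmt17 (a : ℝ) (ha : a < 0) :
    (∀ x : ℝ, 0 < x →
      incGamma a x < Real.exp (-x) * x ^ a * (1 - a + x) / ((x - a) ^ 2 - a + 2 * x) ∧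
      Real.exp (-x) * x ^ a * (1 - a + x) / ((x - a) ^ 2 - a + 2 * x)
        < x ^ a * Real.exp (-x) / (x - a)) ∧
    Filter.Tendsto
      (fun x : ℝ =>
        Real.exp (-x) * x ^ a * (1 - a + x) / ((x - a) ^ 2 - a + 2 * x) / incGamma a x)
      (nhdsWithin 0 (Set.Ioi 0)) (nhds 1) ∧
    Filter.Tendsto
      (fun x : ℝ =>
        Real.exp (-x) * x ^ a * (1 - a + x) / ((x - a) ^ 2 - a + 2 * x) / incGamma a x)
      Filter.atTop (nhds 1) := by
  refine ⟨fun x hx => ⟨?_, ?_⟩, ?_, ?_⟩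
  · rw [mul_div_assoc]
    exact incGamma_lt ha hx
  · rw [mul_div_assoc, mul_comm (x ^ a), ← mul_one_div (Real.exp (-x) * x ^ a) (x - a)]
    exact mul_lt_mul_of_pos_left (middle_lt ha hx) (by positivity)
  · obtain ⟨s, hs, hs1, has⟩ : ∃ s : ℝ, 0 < s ∧ s ≤ 1 ∧ a + s < 0 := by
      refine ⟨min 1 (-a / 2), lt_min one_pos (by linarith), min_le_left _ _, ?_⟩
      linarith [min_le_right 1 (-a / 2)]
    refine tendsto_ratio ha self_mem_nhdsWithin
      (r := fun x => (-1 / a + x ^ s / (a + s)) * Real.exp x *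
        (((x - a) ^ 2 - a + 2 * x) / (1 - a + x))) ?_ ?_
    · have hcont : ContinuousAt (fun x : ℝ => (-1 / a + x ^ s / (a + s)) * Real.exp x *
          (((x - a) ^ 2 - a + 2 * x) / (1 - a + x))) 0 := by
        have h1 : ContinuousAt (fun x : ℝ => x ^ s) 0 :=
          Real.continuousAt_rpow_const 0 s (Or.inr hs.le)
        have h2 : 1 - a + (0 : ℝ) ≠ 0 := by linarith
        exact ((continuousAt_const.add (h1.div_const _)).mul Real.continuous_exp.continuousAt).mul
          (ContinuousAt.div (by fun_prop) (by fun_prop) h2)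
      have h3 := hcont.tendsto.mono_left (nhdsWithin_le_nhds (s := Set.Ioi 0))
      convert h3 using 2
      rw [Real.zero_rpow hs.ne']
      have h2 : 1 - a ≠ 0 := by linarith
      have h4 : a ≠ 0 := ha.ne
      simp only [zero_div, add_zero, Real.exp_zero, mul_one, mul_zero]
      field_simp
      ring
    · intro x hx
      refine le_trans (le_of_eq ?_) (le_incGamma_zero hs hs1 has hx)
      have h1 := (denom_pos ha hx).ne'
      have h2 : 1 - a + x ≠ 0 := by linarith
      have h3 : ((x - a) ^ 2 - a + 2 * x) / (1 - a + x) *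
          ((1 - a + x) / ((x - a) ^ 2 - a + 2 * x)) = 1 := by
        rw [div_mul_div_cancel₀ h2, div_self h1]
      have h4 : Real.exp x * Real.exp (-x) = 1 := by
        rw [← Real.exp_add]; simp
      linear_combination (-1 / a + x ^ s / (a + s)) * x ^ a * Real.exp x * Real.exp (-x) * h3 +
        (-1 / a + x ^ s / (a + s)) * x ^ a * h4
  · refine tendsto_ratio ha (eventually_gt_atTop 0)
      (r := fun x => 1 - (1 - a) / (1 - a + x) ^ 2) ?_ ?_
    · have h1 : Tendsto (fun x : ℝ => (1 - a + x) ^ 2) atTop atTop :=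
        (tendsto_pow_atTop two_ne_zero).comp (tendsto_atTop_add_const_left _ _ tendsto_id)
      simpa using (h1.const_div_atTop (1 - a)).const_sub 1
    · intro x hx
      refine le_trans (le_of_eq ?_) (le_incGamma ha hx)
      have h1 := (denom_pos ha hx).ne'
      have h2 : 1 - a + x ≠ 0 := by linarith
      have h3 : (1 - (1 - a) / (1 - a + x) ^ 2) *
          ((1 - a + x) / ((x - a) ^ 2 - a + 2 * x)) = 1 / (1 - a + x) := by
        generalize hD : (x - a) ^ 2 - a + 2 * x = D at *
        field_simp
        rw [← hD]
        ring
      linear_combination Real.exp (-x) * x ^ a * h3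
end

section
/- With b_a defined for a > −1 (b_a := Γ(a+1)^(1/(a-1)) for a ≠ 1, b_1 := e^(1−γ)): if −1 < a < 2 then a < b_a < 2, and if a > 2 then 2 < b_a < a. -/
/-!
The function `log Γ` is strictly convex on `(0, ∞)`, because `log Γ(x) = log Γ(x + 1) - log x` is
the sum of a convex and a strictly convex function (`strictConvexOn_log_Gamma`). Hence its secant
slopes through a fixed point are strictly increasing.

For `a ≠ 1`, `log b_a = log Γ(a + 1) / (a - 1)` is the slope of `log Γ` from `2` to `a + 1`, and
`log 2` is its slope from `2` to `3`; this compares `b_a` with `2`. The slope from `a` to `a + 1` is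
`log a`; comparing it with the slope from `a` to `2` gives the comparison of `b_a` with `a`, since
`log Γ(2) = 0`. The case `a = 1` follows from `1/2 < γ < 2/3`.
-/

open Real Filter Set

lemma log_Gamma_add_one {x : ℝ} (hx : 0 < x) :
    log (Gamma (x + 1)) = log x + log (Gamma x) := by
  rw [Gamma_add_one hx.ne', log_mul hx.ne' (Gamma_pos_of_pos hx).ne']

lemma log_Gamma_two : log (Gamma 2) = 0 := by
  rw [Gamma_two, log_one]

lemma log_Gamma_three : log (Gamma 3) = log 2 := by
  have h := log_Gamma_add_one (x := 2) (by norm_num)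
  rwa [log_Gamma_two, add_zero, show (2 : ℝ) + 1 = 3 by norm_num] at h

lemma strictConvexOn_log_Gamma : StrictConvexOn ℝ (Ioi 0) (fun x => log (Gamma x)) := by
  have hconv : ConvexOn ℝ (Ioi 0) (fun x : ℝ => log (Gamma (x + 1))) := by
    refine ⟨convex_Ioi 0, fun x hx y hy s t hs ht hst => ?_⟩
    have hx' : (0 : ℝ) < x := hx
    have hy' : (0 : ℝ) < y := hy
    have h := convexOn_log_Gamma.2 (x := x + 1) (y := y + 1) (mem_Ioi.2 (by linarith))
      (mem_Ioi.2 (by linarith)) hs ht hst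
    have e : s • (x + 1) + t • (y + 1) = s • x + t • y + 1 := by
      simp only [smul_eq_mul]
      linear_combination hst
    rw [e] at h
    exact h
  have hsum := hconv.add_strictConvexOn strictConcaveOn_log_Ioi.neg
  refine hsum.congr fun x hx => ?_
  simp [log_Gamma_add_one hx]

lemma log_bCoef {a : ℝ} (ha : -1 < a) (h1 : a ≠ 1) :
    log (bCoef a) = log (Gamma (a + 1)) / (a - 1) := by
  rw [bCoef, if_neg h1, log_rpow (Gamma_pos_of_pos (by linarith))]
  ring

lemma bCoef_pos_s18 {a : ℝ} (ha : -1 < a) : 0 < bCoef a := by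
  rw [bCoef]
  split_ifs
  · exact exp_pos _
  · exact rpow_pos_of_pos (Gamma_pos_of_pos (by linarith)) _

/-- The slope of `log Γ` between `2` and `a + 1` is below the slope between `2` and `3`. -/
lemma bCoef_lt_two {a : ℝ} (ha : -1 < a) (h1 : a ≠ 1) (h2 : a < 2) : bCoef a < 2 := by
  rw [← log_lt_log_iff (bCoef_pos_s18 ha) two_pos, log_bCoef ha h1]
  have h := strictConvexOn_log_Gamma.secant_strict_mono (a := 2) (x := a + 1) (y := 3)
    (by simp) (mem_Ioi.2 (by linarith)) (by simp) (fun h => h1 (by linarith)) (by norm_num)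
    (by linarith)
  rw [log_Gamma_two, log_Gamma_three, show a + 1 - 2 = a - 1 by ring] at h
  norm_num at h
  exact h

lemma two_lt_bCoef {a : ℝ} (h2 : 2 < a) : 2 < bCoef a := by
  have ha : -1 < a := by linarith
  have h1 : a ≠ 1 := by linarith
  rw [← log_lt_log_iff two_pos (bCoef_pos_s18 ha), log_bCoef ha h1]
  have h := strictConvexOn_log_Gamma.secant_strict_mono (a := 2) (x := 3) (y := a + 1)
    (by simp) (by simp) (mem_Ioi.2 (by linarith)) (by norm_num) (fun h => h1 (by linarith))
    (by linarith)
  rw [log_Gamma_two, log_Gamma_three, show a + 1 - 2 = a - 1 by ring] at h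
  norm_num at h
  exact h

/-- For `a < 1` the slope of `log Γ` from `a` to `a + 1` is below that from `a` to `2`; for
`1 < a < 2` it is above. Dividing by `a - 1`, which changes sign too, gives one conclusion. -/
lemma lt_bCoef {a : ℝ} (ha : 0 < a) (h1 : a ≠ 1) (h2 : a < 2) : a < bCoef a := by
  have ha' : -1 < a := by linarith
  have hL := log_Gamma_add_one ha
  have hconv := strictConvexOn_log_Gamma
  rw [← log_lt_log_iff ha (bCoef_pos_s18 ha'), log_bCoef ha' h1]
  rcases lt_or_gt_of_ne h1 with h | h
  · have hs := hconv.secant_strict_mono (a := a) (x := a + 1) (y := 2)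
      ha (mem_Ioi.2 (by linarith)) (by simp) (by linarith) (by linarith) (by linarith)
    rw [log_Gamma_two, hL, lt_div_iff₀ (by linarith)] at hs
    rw [lt_div_iff_of_neg (by linarith), hL]
    ring_nf at hs ⊢
    linarith
  · have hs := hconv.secant_strict_mono (a := a) (x := 2) (y := a + 1)
      ha (by simp) (mem_Ioi.2 (by linarith)) (by linarith) (by linarith) (by linarith)
    rw [log_Gamma_two, hL, div_lt_iff₀ (by linarith)] at hs
    rw [lt_div_iff₀ (by linarith), hL]
    ring_nf at hs ⊢
    linarith

lemma bCoef_lt {a : ℝ} (h2 : 2 < a) : bCoef a < a := by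
  have ha : 0 < a := by linarith
  have ha' : -1 < a := by linarith
  have hL := log_Gamma_add_one ha
  rw [← log_lt_log_iff (bCoef_pos_s18 ha') ha, log_bCoef ha' (by linarith)]
  have hs := strictConvexOn_log_Gamma.secant_strict_mono (a := a) (x := 2) (y := a + 1)
    ha (by simp) (mem_Ioi.2 (by linarith)) (by linarith) (by linarith) (by linarith)
  rw [log_Gamma_two, hL, div_lt_iff_of_neg (by linarith)] at hs
  rw [div_lt_iff₀ (by linarith), hL]
  ring_nf at hs ⊢
  linarith

lemma bCoef_one_bounds : 1 < bCoef 1 ∧ bCoef 1 < 2 := by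
  have hlo := one_half_lt_eulerMascheroniConstant
  have hhi := eulerMascheroniConstant_lt_two_thirds
  rw [bCoef, if_pos rfl]
  refine ⟨one_lt_exp_iff.2 (by linarith), ?_⟩
  rw [← lt_log_iff_exp_lt two_pos]
  have := log_two_gt_d9
  linarith

theorem stmt18 :
    (∀ a : ℝ, -1 < a → a < 2 → a < bCoef a ∧ bCoef a < 2) ∧
    (∀ a : ℝ, 2 < a → 2 < bCoef a ∧ bCoef a < a) := by
  refine ⟨fun a ha h2 => ?_, fun a h2 => ⟨two_lt_bCoef h2, bCoef_lt h2⟩⟩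
  rcases eq_or_ne a 1 with rfl | h1
  · exact bCoef_one_bounds
  refine ⟨?_, bCoef_lt_two ha h1 h2⟩
  rcases le_or_gt a 0 with h0 | h0
  · exact h0.trans_lt (bCoef_pos_s18 ha)
  · exact lt_bCoef h0 h1 h2
end
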